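/- arXiv:0812.0062 — 2 statements merged into one kernel-verified Lean document; each statement's English description precedes it below -/
import Mathlib

section
/- For every integer d ≥ 2 and every d-weighting α of a finite rooted tree Γ: (i) for every vertex q and every child r ∈ q⁺, there is at most one s ∈ r⁺ such that the chain {q, r, s} is contained in no member of Γ_α(q); and (ii) if a chain {p, …, q, r} rooted at p with at least three vertices (so p ≺ q and r ∈ q⁺) is contained in some γ ∈ Γ_α(p), and s ∈ r⁺ is such that the chain {q, r, s} is contained in no member of Γ_α(q), then s ∈ γ. (Properties 3(a) and 3(b) of the Proposition on linear-proximity structures.) -/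
/-- A finite rooted tree: a distinguished root, a parent map fixing the root,
and a depth function witnessing that iterating the parent map reaches the root. -/
structure PTree (V : Type) where
  root : V
  parent : V → V
  depth : V → ℕ
  parent_root : parent root = root
  depth_root : depth root = 0
  depth_eq : ∀ v, v ≠ root → depth v = depth (parent v) + 1

namespace PTree

variable {V : Type}

/-- `r ⪰ q` : the descendancy order (`q` lies on the path from `r` to the root). -/
def desc (T : PTree V) (r q : V) : Prop := ∃ k : ℕ, T.parent^[k] r = q

/-- `r ≻ q`. -/
def sdesc (T : PTree V) (r q : V) : Prop := T.desc r q ∧ r ≠ q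

/-- `r ∈ q⁺` : `r` is a child of `q`. -/
def child (T : PTree V) (r q : V) : Prop := T.parent r = q ∧ r ≠ T.root

/-- `w` is a d-weighting of `T` : each non-root vertex gets a weight in `{1,…,d}`,
and distinct children of a common vertex get distinct weights. -/
def IsWeighting (T : PTree V) (d : ℕ) (w : V → ℕ) : Prop :=
  (∀ v, v ≠ T.root → 1 ≤ w v ∧ w v ≤ d) ∧
    ∀ r s, r ≠ T.root → s ≠ T.root → T.parent r = T.parent s → r ≠ s → w r ≠ w s

/-- The length of the path (code) from `q` up to a descendant `r`. -/
def codeLen (T : PTree V) (r q : V) : ℕ := T.depth r - T.depth q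

/-- The code of `r` over `q` has the form `(a, b, b, …, b)` : the first entry is `a` and
every later entry is `b`.  (The `j`-th entry of the code, `1 ≤ j ≤ k`, is the weight of
`parent^[k-j] r`, where `k` is the code length.) -/
def codeAB (T : PTree V) (w : V → ℕ) (q : V) (a b : ℕ) (r : V) : Prop :=
  w (T.parent^[T.codeLen r q - 1] r) = a ∧
    ∀ i, i + 2 ≤ T.codeLen r q → w (T.parent^[i] r) = b

/-- `Γ_q(a,b)` : the vertex `q` together with all descendants `r ≻ q` whose code over `q`
has the form `(a,b,b,…,b)` or `(b,a,a,…,a)`. -/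
def gammaSet (T : PTree V) (w : V → ℕ) (q : V) (a b : ℕ) : Set V :=
  {r | r = q ∨ (T.sdesc r q ∧ (T.codeAB w q a b r ∨ T.codeAB w q b a r))}

/-- `Γ(q)` : the family of the sets `Γ_q(a,b)`, `a ≠ b` in `{1,…,d}`, which are maximal
under inclusion among all such sets. -/
def gammaFam (T : PTree V) (w : V → ℕ) (d : ℕ) (q : V) : Set (Set V) :=
  {S | ∃ a b : ℕ, a ≠ b ∧ 1 ≤ a ∧ a ≤ d ∧ 1 ≤ b ∧ b ≤ d ∧ S = T.gammaSet w q a b ∧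
    ∀ a' b' : ℕ, a' ≠ b' → 1 ≤ a' → a' ≤ d → 1 ≤ b' → b' ≤ d →
      S ⊆ T.gammaSet w q a' b' → S = T.gammaSet w q a' b'}

/-- `S` is a chain rooted at `q` : it contains `q`, consists of descendants of `q`, is
closed under taking parents (down to `q`), and is totally ordered by descendancy. -/
def IsChainAt (T : PTree V) (q : V) (S : Set V) : Prop :=
  q ∈ S ∧ (∀ r ∈ S, T.desc r q) ∧ (∀ r ∈ S, r ≠ q → T.parent r ∈ S) ∧
    ∀ r ∈ S, ∀ s ∈ S, T.desc r s ∨ T.desc s r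

/-- `S` is a bi-chain rooted at `q` : the union of two chains rooted at `q`, each with at
least two vertices, whose only common vertex is `q`. -/
def IsBichainAt (T : PTree V) (q : V) (S : Set V) : Prop :=
  ∃ S₁ S₂ : Set V, T.IsChainAt q S₁ ∧ T.IsChainAt q S₂ ∧ S = S₁ ∪ S₂ ∧
    S₁ ∩ S₂ = {q} ∧ (∃ r ∈ S₁, r ≠ q) ∧ (∃ r ∈ S₂, r ≠ q)

end PTree

/-!
If a chain `{q, r, s}` has code `(a, b)` with `a ≠ b`, it lies in `Γ_q(a, b)`, hence in a maximal
set of that form, as there are only finitely many pairs `(a, b)`. So a chain contained in no member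
of `Γ_α(q)` satisfies `α s = α r`. Distinct children of `r` have distinct weights, which gives (i).
For (ii), the code of `r` over `p` has at least two entries, so its last entry `α r` is the one
that is repeated, and the code stays of the same form when `α s = α r` is appended.
-/

namespace PTree

variable {V : Type} {T : PTree V} {w : V → ℕ} {d : ℕ} {p q r s : V} {a b : ℕ}

theorem desc_refl (T : PTree V) (q : V) : T.desc q q :=
  ⟨0, rfl⟩

theorem child.desc_of_desc (hr : T.child r q) (hq : T.desc q p) : T.desc r p := by
  obtain ⟨k, hk⟩ := hq
  exact ⟨k + 1, by rw [Function.iterate_succ_apply, hr.1, hk]⟩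

theorem depth_parent_le (T : PTree V) (v : V) : T.depth (T.parent v) ≤ T.depth v := by
  by_cases hv : v = T.root
  · rw [hv, T.parent_root]
  · exact (Nat.le_succ _).trans_eq (T.depth_eq v hv).symm

theorem desc.depth_le (h : T.desc r q) : T.depth q ≤ T.depth r := by
  obtain ⟨k, rfl⟩ := h
  induction k with
  | zero => rfl
  | succ k ih =>
    rw [Function.iterate_succ_apply']
    exact (T.depth_parent_le _).trans ih

theorem child.depth_eq (hr : T.child r q) : T.depth r = T.depth q + 1 := by
  rw [T.depth_eq r hr.2, hr.1]

theorem child.sdesc_of_desc (hr : T.child r q) (hq : T.desc q p) : T.sdesc r p := by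
  refine ⟨hr.desc_of_desc hq, ?_⟩
  rintro rfl
  have := hq.depth_le
  have := hr.depth_eq
  omega

theorem child.sdesc (hr : T.child r q) : T.sdesc r q :=
  hr.sdesc_of_desc (T.desc_refl q)

theorem sdesc.exists_child (h : T.sdesc r q) : ∃ v, T.child r v ∧ T.desc v q := by
  obtain ⟨⟨k, hk⟩, hne⟩ := h
  have hroot : r ≠ T.root := by
    rintro rfl
    exact hne (by rw [← hk, Function.iterate_fixed T.parent_root])
  cases k with
  | zero => exact absurd hk hne
  | succ k => exact ⟨T.parent r, ⟨rfl, hroot⟩, k, hk⟩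

theorem child.codeLen_eq (hr : T.child r q) : T.codeLen r q = 1 := by
  rw [codeLen, hr.depth_eq, Nat.add_sub_cancel_left]

theorem child.codeLen_of_desc (hr : T.child r q) (hq : T.desc q p) :
    T.codeLen r p = T.codeLen q p + 1 := by
  rw [codeLen, codeLen, hr.depth_eq, Nat.sub_add_comm hq.depth_le]

theorem sdesc.codeLen_pos (h : T.sdesc r q) : 0 < T.codeLen r q := by
  obtain ⟨v, hrv, hvq⟩ := h.exists_child
  rw [hrv.codeLen_of_desc hvq]
  exact Nat.succ_pos _

theorem child.codeAB_iff (hr : T.child r q) : T.codeAB w q a b r ↔ w r = a := by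
  simp [codeAB, hr.codeLen_eq]

theorem child.codeAB_iff_of_sdesc (hs : T.child s r) (hr : T.sdesc r p) :
    T.codeAB w p a b s ↔ T.codeAB w p a b r ∧ w s = b := by
  have hpos : 0 < T.codeLen r p := hr.codeLen_pos
  have hiter (i : ℕ) : T.parent^[i + 1] s = T.parent^[i] r := by
    rw [Function.iterate_succ_apply, hs.1]
  obtain ⟨n, hn⟩ : ∃ n, T.codeLen r p = n + 1 := Nat.exists_eq_add_one.mpr hpos
  simp only [codeAB, hs.codeLen_of_desc hr.1, hn, Nat.add_sub_cancel, hiter]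
  constructor
  · rintro ⟨hfirst, hrest⟩
    refine ⟨⟨hfirst, fun i hi => ?_⟩, hrest 0 (by omega)⟩
    rw [← hiter]
    exact hrest (i + 1) (by omega)
  · rintro ⟨⟨hfirst, hrest⟩, hlast⟩
    refine ⟨hfirst, fun i hi => ?_⟩
    cases i with
    | zero => exact hlast
    | succ i =>
      rw [hiter]
      exact hrest i (by omega)

theorem chain_subset_gammaSet (hr : T.child r q) (hs : T.child s r) :
    {q, r, s} ⊆ T.gammaSet w q (w r) (w s) := by
  have hcode : T.codeAB w q (w r) (w s) r := hr.codeAB_iff.mpr rfl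
  rintro v (rfl | rfl | rfl)
  · exact Or.inl rfl
  · exact Or.inr ⟨hr.sdesc, Or.inl hcode⟩
  · exact Or.inr ⟨hs.sdesc_of_desc hr.sdesc.1,
      Or.inl ((hs.codeAB_iff_of_sdesc hr.sdesc).mpr ⟨hcode, rfl⟩)⟩

theorem exists_mem_gammaFam_gammaSet_subset (T : PTree V) (w : V → ℕ) (q : V) (hab : a ≠ b)
    (ha : 1 ≤ a ∧ a ≤ d) (hb : 1 ≤ b ∧ b ≤ d) :
    ∃ S ∈ T.gammaFam w d q, T.gammaSet w q a b ⊆ S := by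
  let candidates : Set (Set V) :=
    {S | ∃ a b : ℕ, a ≠ b ∧ 1 ≤ a ∧ a ≤ d ∧ 1 ≤ b ∧ b ≤ d ∧ S = T.gammaSet w q a b}
  have hfinite : candidates.Finite := by
    refine ((Set.finite_Icc 1 d).image2 (T.gammaSet w q) (Set.finite_Icc 1 d)).subset ?_
    rintro S ⟨x, y, -, hx, hxd, hy, hyd, rfl⟩
    exact Set.mem_image2_of_mem ⟨hx, hxd⟩ ⟨hy, hyd⟩
  obtain ⟨S, hle, hmax⟩ := hfinite.exists_le_maximal
    (show T.gammaSet w q a b ∈ candidates from ⟨a, b, hab, ha.1, ha.2, hb.1, hb.2, rfl⟩)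
  obtain ⟨x, y, hxy, hx, hxd, hy, hyd, hS⟩ := hmax.prop
  refine ⟨S, ⟨x, y, hxy, hx, hxd, hy, hyd, hS, ?_⟩, hle⟩
  intro a' b' hab' ha' had' hb' hbd' hsub
  exact hmax.eq_of_subset ⟨a', b', hab', ha', had', hb', hbd', rfl⟩ hsub

theorem IsWeighting.weight_eq_of_chain_not_subset (hw : T.IsWeighting d w) (hr : T.child r q)
    (hs : T.child s r) (hescape : ∀ S ∈ T.gammaFam w d q, ¬ ({q, r, s} : Set V) ⊆ S) :
    w s = w r := by
  by_contra hne
  obtain ⟨S, hS, hsub⟩ :=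
    T.exists_mem_gammaFam_gammaSet_subset w q (Ne.symm hne) (hw.1 r hr.2) (hw.1 s hs.2)
  exact hescape S hS ((chain_subset_gammaSet hr hs).trans hsub)

theorem IsWeighting.eq_of_child_of_weight_eq (hw : T.IsWeighting d w) (hr : T.child r q)
    (hs : T.child s q) (h : w r = w s) : r = s := by
  by_contra hne
  exact hw.2 r s hr.2 hs.2 (hr.1.trans hs.1.symm) hne h

theorem codeAB_of_weight_eq (hq : T.sdesc q p) (hr : T.child r q) (hs : T.child s r)
    (hweight : w s = w r) (h : T.codeAB w p a b r) : T.codeAB w p a b s := by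
  have hlast : w r = b := ((hr.codeAB_iff_of_sdesc hq).mp h).2
  exact (hs.codeAB_iff_of_sdesc (hr.sdesc_of_desc hq.1)).mpr ⟨h, hweight.trans hlast⟩

theorem mem_gammaSet_of_weight_eq (hq : T.sdesc q p) (hr : T.child r q) (hs : T.child s r)
    (hweight : w s = w r) (h : r ∈ T.gammaSet w p a b) : s ∈ T.gammaSet w p a b := by
  have hrp : T.sdesc r p := hr.sdesc_of_desc hq.1
  obtain ⟨-, hcode⟩ := h.resolve_left hrp.2
  exact Or.inr ⟨hs.sdesc_of_desc hrp.1, hcode.imp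
    (codeAB_of_weight_eq hq hr hs hweight) (codeAB_of_weight_eq hq hr hs hweight)⟩

end PTree

theorem gammaFam_escape_properties_general {V : Type} (T : PTree V)
    (d : ℕ) (w : V → ℕ) (hw : T.IsWeighting d w) :
    (∀ q r s s' : V, T.child r q → T.child s r → T.child s' r →
      (∀ S ∈ T.gammaFam w d q, ¬ ({q, r, s} : Set V) ⊆ S) →
      (∀ S ∈ T.gammaFam w d q, ¬ ({q, r, s'} : Set V) ⊆ S) → s = s') ∧
    (∀ p q r s : V, T.sdesc q p → T.child r q → T.child s r →
      (∀ S ∈ T.gammaFam w d q, ¬ ({q, r, s} : Set V) ⊆ S) →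
      ∀ γ ∈ T.gammaFam w d p, r ∈ γ → s ∈ γ) := by
  constructor
  · intro q r s s' hr hs hs' hescape hescape'
    have hweight : w s = w r := hw.weight_eq_of_chain_not_subset hr hs hescape
    have hweight' : w s' = w r := hw.weight_eq_of_chain_not_subset hr hs' hescape'
    exact hw.eq_of_child_of_weight_eq hs hs' (hweight.trans hweight'.symm)
  · rintro p q r s hq hr hs hescape γ ⟨a, b, -, -, -, -, -, rfl, -⟩ hrγ
    have hweight : w s = w r := hw.weight_eq_of_chain_not_subset hr hs hescape
    exact PTree.mem_gammaSet_of_weight_eq hq hr hs hweight hrγ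

/-- For every `d ≥ 2` and every `d`-weighting `α` of a finite rooted
tree:
(i) for every vertex `q` and every child `r ∈ q⁺`, there is at most one `s ∈ r⁺` such
that the chain `{q, r, s}` is contained in no member of `Γ_α(q)`;
(ii) if the chain from `p` to `r` (where `p ≺ q`, `r ∈ q⁺`, so it has at least three
vertices) is contained in some `γ ∈ Γ_α(p)`, and `s ∈ r⁺` is such that `{q, r, s}` is
contained in no member of `Γ_α(q)`, then `s ∈ γ`. -/
theorem gammaFam_escape_properties {V : Type} [Fintype V] (T : PTree V)
    (d : ℕ) (hd : 2 ≤ d) (w : V → ℕ) (hw : T.IsWeighting d w) :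
    (∀ q r s s' : V, T.child r q → T.child s r → T.child s' r →
      (∀ S ∈ T.gammaFam w d q, ¬ ({q, r, s} : Set V) ⊆ S) →
      (∀ S ∈ T.gammaFam w d q, ¬ ({q, r, s'} : Set V) ⊆ S) → s = s') ∧
    (∀ p q r s : V, T.sdesc q p → T.child r q → T.child s r →
      (∀ S ∈ T.gammaFam w d q, ¬ ({q, r, s} : Set V) ⊆ S) →
      ∀ γ ∈ T.gammaFam w d p, {v : V | T.desc r v ∧ T.desc v p} ⊆ γ → s ∈ γ) := by
  obtain ⟨hunique, hmem⟩ := gammaFam_escape_properties_general T d w hw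
  exact ⟨hunique, fun p q r s hq hr hs hescape γ hγ hchain =>
    hmem p q r s hq hr hs hescape γ hγ (hchain ⟨T.desc_refl r, hr.desc_of_desc hq.1⟩)⟩
end

section
/- Let d ≥ 2 and let α be a d-weighting of a finite rooted tree Γ. Then there exists a 2-weighting β of Γ such that Γ_β(q) = Γ_α(q) for every vertex q if and only if Γ_α(q) has exactly one element for every vertex q; and in that case every vertex of Γ has at most two children. (Combinatorial content, via the codification of toric constellations by weighted trees, of the Theorem: the characteristic cone of a toric constellation is regular if and only if its LP-Enriques diagram is induced by a two-dimensional constellation.) -/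
/-!
Call `r` linearly proximate to `q` if its code over `q` is `(a, b, …, b)` with `a ≠ b`: either `r`
is a child of `q`, or the weight changes right after the first step from `q` to `r` and never again.
Together with `q` these vertices form the union of the sets `Γ_q(a,b)`, so `Γ(q)` has a single
element exactly when one `Γ_q(a,b)` contains them all, and that element is then the whole union.
With two weights this always happens.

Conversely, this union depends only on the edges along which the weight changes. If every `Γ(q)` is
a singleton, then all children of `p` whose weight differs from that of `p` have the same weight,
since they lie in a single `Γ_{parent p}(a,b)`. Hence colouring each vertex by the parity of the
number of weight changes on its path to the root separates siblings, and this colouring changes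
along the same edges as the given weighting. The root has no weight of its own: giving it the weight
`a`, where `Γ(root) = {Γ_root(a,b)}`, makes the argument uniform.
-/

namespace PTree

variable {V : Type} {T : PTree V} {w w' : V → ℕ} {a b d : ℕ} {p q r s : V}

theorem depth_parent (T : PTree V) (v : V) : T.depth (T.parent v) = T.depth v - 1 := by
  by_cases hv : v = T.root
  · rw [hv, T.parent_root, T.depth_root]
  · rw [T.depth_eq v hv, Nat.add_sub_cancel]

theorem depth_iterate_parent (T : PTree V) (k : ℕ) (v : V) :
    T.depth (T.parent^[k] v) = T.depth v - k := by
  induction k with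
  | zero => rfl
  | succ k ih => rw [Function.iterate_succ_apply', depth_parent, ih, Nat.sub_sub]

theorem depth_eq_zero_iff {v : V} : T.depth v = 0 ↔ v = T.root := by
  refine ⟨fun h => ?_, fun h => h ▸ T.depth_root⟩
  by_contra hv
  exact absurd (T.depth_eq v hv) (by omega)

theorem codeLen_self (T : PTree V) (q : V) : T.codeLen q q = 0 := Nat.sub_self _

theorem codeLen_iterate_parent {k : ℕ} (hk : k ≤ T.depth r) :
    T.codeLen r (T.parent^[k] r) = k := by
  rw [codeLen, depth_iterate_parent, Nat.sub_sub_self hk]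

theorem iterate_parent_ne_root {i : ℕ} (hi : i < T.codeLen r q) : T.parent^[i] r ≠ T.root := by
  rw [Ne, ← depth_eq_zero_iff, depth_iterate_parent]
  unfold codeLen at hi
  omega

theorem desc.iterate_codeLen (h : T.desc r q) : T.parent^[T.codeLen r q] r = q := by
  obtain ⟨k, rfl⟩ := h
  rcases le_total k (T.depth r) with hk | hk
  · rw [codeLen_iterate_parent hk]
  · have eq_root : ∀ j, T.depth r ≤ j → T.parent^[j] r = T.root := fun j hj => by
      rw [← depth_eq_zero_iff, depth_iterate_parent, Nat.sub_eq_zero_of_le hj]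
    rw [eq_root k hk, codeLen, T.depth_root]
    exact eq_root _ le_rfl

theorem desc.codeLen_eq_zero_iff (h : T.desc r q) : T.codeLen r q = 0 ↔ r = q := by
  refine ⟨fun h₀ => ?_, fun h₀ => h₀ ▸ T.codeLen_self r⟩
  simpa [h₀] using h.iterate_codeLen

theorem child.codeLen_eq_one (h : T.child s q) : T.codeLen s q = 1 := by
  rw [codeLen, T.depth_eq s h.2, h.1, Nat.add_sub_cancel_left]

theorem child.codeLen_parent_eq_two (h : T.child s p) (hp : p ≠ T.root) :
    T.codeLen s (T.parent p) = 2 := by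
  rw [codeLen, T.depth_eq s h.2, h.1, T.depth_eq p hp]
  omega

theorem gammaSet_comm (T : PTree V) (w : V → ℕ) (q : V) (a b : ℕ) :
    T.gammaSet w q a b = T.gammaSet w q b a :=
  Set.ext fun _ => or_congr_right (and_congr_right fun _ => or_comm)

/-- The sets `Γ_q(a,b)` for all pairs of distinct weights `a, b` in `{1,…,d}`; the family `Γ(q)`
consists of the maximal ones. -/
def gammaSets (T : PTree V) (w : V → ℕ) (d : ℕ) (q : V) : Set (Set V) :=
  (fun x : ℕ × ℕ => T.gammaSet w q x.1 x.2) '' ((Finset.Icc 1 d).offDiag : Set (ℕ × ℕ))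

theorem mem_gammaSets {S : Set V} :
    S ∈ T.gammaSets w d q ↔
      ∃ a b, a ≠ b ∧ 1 ≤ a ∧ a ≤ d ∧ 1 ≤ b ∧ b ≤ d ∧ S = T.gammaSet w q a b := by
  simp only [gammaSets, Set.mem_image, Finset.mem_coe, Finset.mem_offDiag, Finset.mem_Icc,
    Prod.exists]
  exact exists₂_congr fun a b => by rw [eq_comm]; tauto

theorem finite_gammaSets (T : PTree V) (w : V → ℕ) (d : ℕ) (q : V) :
    (T.gammaSets w d q).Finite :=
  (Finset.finite_toSet _).image _

theorem mem_gammaFam_iff_maximal {S : Set V} :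
    S ∈ T.gammaFam w d q ↔ Maximal (· ∈ T.gammaSets w d q) S := by
  constructor
  · rintro ⟨a, b, hab, ha, ha', hb, hb', rfl, hmax⟩
    refine ⟨mem_gammaSets.2 ⟨a, b, hab, ha, ha', hb, hb', rfl⟩, fun R hR hSR => ?_⟩
    obtain ⟨a', b', hab', h₁, h₂, h₃, h₄, rfl⟩ := mem_gammaSets.1 hR
    exact (hmax a' b' hab' h₁ h₂ h₃ h₄ hSR).ge
  · intro hS
    obtain ⟨a, b, hab, ha, ha', hb, hb', hSab⟩ := mem_gammaSets.1 hS.prop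
    exact ⟨a, b, hab, ha, ha', hb, hb', hSab, fun a' b' hab' h₁ h₂ h₃ h₄ hSR =>
      hS.eq_of_subset (mem_gammaSets.2 ⟨a', b', hab', h₁, h₂, h₃, h₄, rfl⟩) hSR⟩

theorem exists_mem_gammaFam_superset {S : Set V} (hS : S ∈ T.gammaSets w d q) :
    ∃ M ∈ T.gammaFam w d q, S ⊆ M := by
  obtain ⟨M, hSM, hM⟩ := (T.finite_gammaSets w d q).exists_le_maximal hS
  exact ⟨M, mem_gammaFam_iff_maximal.2 hM, hSM⟩

theorem gammaSets_two (T : PTree V) (w : V → ℕ) (q : V) :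
    T.gammaSets w 2 q = {T.gammaSet w q 1 2} := by
  ext S
  rw [mem_gammaSets, Set.mem_singleton_iff]
  constructor
  · rintro ⟨a, b, hab, ha, ha', hb, hb', rfl⟩
    obtain ⟨rfl, rfl⟩ | ⟨rfl, rfl⟩ : (a = 1 ∧ b = 2) ∨ (a = 2 ∧ b = 1) := by omega
    · rfl
    · exact T.gammaSet_comm w q 2 1
  · rintro rfl
    exact ⟨1, 2, by simp⟩

theorem existsUnique_mem_gammaFam_two (T : PTree V) (w : V → ℕ) (q : V) :
    ∃! S, S ∈ T.gammaFam w 2 q := by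
  simp only [mem_gammaFam_iff_maximal, gammaSets_two, Set.mem_singleton_iff, maximal_eq_iff,
    existsUnique_eq]

/-- The vertex `q` together with the vertices linearly proximate to `q`: those `r ≻ q` whose code
over `q` is `(a, b, …, b)` with `a ≠ b`. Codes are read from `r` downwards, so the last comparison,
`i + 2 = codeLen r q`, is the one between the first two entries of the code. -/
def linProx (T : PTree V) (w : V → ℕ) (q : V) : Set V :=
  {r | T.desc r q ∧ ∀ i, i + 2 ≤ T.codeLen r q →
    (w (T.parent^[i] r) = w (T.parent^[i + 1] r) ↔ i + 2 < T.codeLen r q)}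

theorem codeAB.mem_linProx (hab : a ≠ b) (hr : T.desc r q) (h : T.codeAB w q a b r) :
    r ∈ T.linProx w q := by
  refine ⟨hr, fun i hi => ?_⟩
  rw [h.2 i hi]
  rcases hi.lt_or_eq with hlt | heq
  · rw [h.2 (i + 1) hlt]
    exact iff_of_true rfl hlt
  · have hfirst : w (T.parent^[i + 1] r) = a := by
      rw [← h.1, ← heq]
      rfl
    rw [hfirst]
    exact iff_of_false hab.symm heq.not_lt

theorem gammaSet_subset_linProx (hab : a ≠ b) : T.gammaSet w q a b ⊆ T.linProx w q := by
  rintro r (rfl | ⟨hr, h | h⟩)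
  · exact ⟨⟨0, rfl⟩, fun i hi => by simp [codeLen_self] at hi⟩
  · exact h.mem_linProx hab hr.1
  · exact h.mem_linProx hab.symm hr.1

theorem weight_iterate_parent_of_mem_linProx (hr : r ∈ T.linProx w q) {i : ℕ}
    (hi : i + 2 ≤ T.codeLen r q) : w (T.parent^[i] r) = w r := by
  induction i with
  | zero => rfl
  | succ i ih => rw [← (hr.2 i (by omega)).2 hi, ih (by omega)]

theorem exists_codeAB_of_mem_linProx (hd : 2 ≤ d) (hw : T.IsWeighting d w)
    (hr : r ∈ T.linProx w q) (hrq : r ≠ q) :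
    ∃ a b, a ≠ b ∧ 1 ≤ a ∧ a ≤ d ∧ 1 ≤ b ∧ b ≤ d ∧ T.codeAB w q a b r := by
  have hpos : T.codeLen r q ≠ 0 := mt hr.1.codeLen_eq_zero_iff.1 hrq
  have hfirst := hw.1 _
    (iterate_parent_ne_root (r := r) (q := q) (i := T.codeLen r q - 1) (by omega))
  suffices ∃ b, w (T.parent^[T.codeLen r q - 1] r) ≠ b ∧ 1 ≤ b ∧ b ≤ d ∧
      ∀ i, i + 2 ≤ T.codeLen r q → w (T.parent^[i] r) = b by
    obtain ⟨b, hne, hb, hb', hlater⟩ := this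
    exact ⟨_, b, hne, hfirst.1, hfirst.2, hb, hb', rfl, hlater⟩
  by_cases hone : T.codeLen r q = 1
  · by_cases h₁ : w (T.parent^[T.codeLen r q - 1] r) = 1
    · exact ⟨2, by omega, by omega, hd, fun i hi => by omega⟩
    · exact ⟨1, h₁, le_rfl, by omega, fun i hi => by omega⟩
  · obtain ⟨n, hn⟩ : ∃ n, T.codeLen r q = n + 2 := ⟨T.codeLen r q - 2, by omega⟩
    have hlast := hw.1 r (iterate_parent_ne_root (i := 0) (q := q) (by omega))
    have hchange : w (T.parent^[n] r) ≠ w (T.parent^[n + 1] r) :=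
      fun h => hn.not_gt ((hr.2 n hn.ge).1 h)
    rw [weight_iterate_parent_of_mem_linProx hr hn.ge] at hchange
    refine ⟨w r, ?_, hlast.1, hlast.2, fun i => weight_iterate_parent_of_mem_linProx hr⟩
    rw [hn]
    exact hchange.symm

theorem exists_mem_gammaSets_of_mem_linProx (hd : 2 ≤ d) (hw : T.IsWeighting d w)
    (hr : r ∈ T.linProx w q) : ∃ S ∈ T.gammaSets w d q, r ∈ S := by
  by_cases hrq : r = q
  · exact ⟨_, mem_gammaSets.2 ⟨1, 2, by omega, by omega, by omega, by omega, hd, rfl⟩,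
      Or.inl hrq⟩
  · obtain ⟨a, b, hab, ha, ha', hb, hb', hcode⟩ := exists_codeAB_of_mem_linProx hd hw hr hrq
    exact ⟨_, mem_gammaSets.2 ⟨a, b, hab, ha, ha', hb, hb', rfl⟩,
      Or.inr ⟨⟨hr.1, hrq⟩, Or.inl hcode⟩⟩

theorem two_le_of_mem_gammaFam {S : Set V} (hS : S ∈ T.gammaFam w d q) : 2 ≤ d := by
  obtain ⟨a, b, hab, ha, ha', hb, hb', -⟩ := hS
  omega

theorem gammaFam_eq_singleton_linProx (hw : T.IsWeighting d w)
    (h : ∃! S, S ∈ T.gammaFam w d q) : T.gammaFam w d q = {T.linProx w q} := by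
  obtain ⟨S, hS, huniq⟩ := h
  suffices S = T.linProx w q from
    this ▸ Set.eq_singleton_iff_unique_mem.2 ⟨hS, huniq⟩
  apply Set.Subset.antisymm
  · obtain ⟨a, b, hab, -, -, -, -, rfl, -⟩ := hS
    exact gammaSet_subset_linProx hab
  · intro r hr
    obtain ⟨R, hR, hrR⟩ := exists_mem_gammaSets_of_mem_linProx (two_le_of_mem_gammaFam hS) hw hr
    obtain ⟨M, hM, hRM⟩ := exists_mem_gammaFam_superset hR
    exact huniq M hM ▸ hRM hrR

theorem exists_linProx_eq_gammaSet (hw : T.IsWeighting d w)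
    (h : ∃! S, S ∈ T.gammaFam w d q) : ∃ a b, T.linProx w q = T.gammaSet w q a b := by
  obtain ⟨a, b, -, -, -, -, -, hS, -⟩ : T.linProx w q ∈ T.gammaFam w d q :=
    gammaFam_eq_singleton_linProx hw h ▸ rfl
  exact ⟨a, b, hS⟩

theorem child.weight_eq_or_eq (hs : T.child s q) (h : T.linProx w q ⊆ T.gammaSet w q a b) :
    w s = a ∨ w s = b := by
  have hlen := hs.codeLen_eq_one
  have hmem : s ∈ T.linProx w q := ⟨⟨1, hs.1⟩, fun i hi => by omega⟩
  rcases h hmem with rfl | ⟨-, h | h⟩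
  · simp [codeLen_self] at hlen
  · exact Or.inl (by simpa [hlen] using h.1)
  · exact Or.inr (by simpa [hlen] using h.1)

theorem child.weight_pair_eq (hs : T.child s p) (hp : p ≠ T.root) (hsp : w s ≠ w p)
    (h : T.linProx w (T.parent p) ⊆ T.gammaSet w (T.parent p) a b) :
    (w p = a ∧ w s = b) ∨ (w p = b ∧ w s = a) := by
  have hlen := hs.codeLen_parent_eq_two hp
  have hmem : s ∈ T.linProx w (T.parent p) := by
    refine ⟨⟨2, by simp [hs.1]⟩, fun i hi => ?_⟩
    obtain rfl : i = 0 := by omega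
    simpa [hlen, hs.1] using hsp
  have pair_of_code : ∀ {a b}, T.codeAB w (T.parent p) a b s → w p = a ∧ w s = b :=
    fun hcode => ⟨by simpa [hlen, hs.1] using hcode.1, hcode.2 0 hlen.ge⟩
  rcases h hmem with hsq | ⟨-, hcode | hcode⟩
  · simp [← hsq, codeLen_self] at hlen
  · exact Or.inl (pair_of_code hcode)
  · exact Or.inr (pair_of_code hcode)

theorem eq_or_eq_or_eq_of_child (hw : T.IsWeighting d w) (h : ∃! S, S ∈ T.gammaFam w d q)
    {s₁ s₂ s₃ : V} (h₁ : T.child s₁ q) (h₂ : T.child s₂ q) (h₃ : T.child s₃ q) :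
    s₁ = s₂ ∨ s₁ = s₃ ∨ s₂ = s₃ := by
  obtain ⟨a, b, hab⟩ := exists_linProx_eq_gammaSet hw h
  have weight_inj : ∀ {s t}, T.child s q → T.child t q → w s = w t → s = t :=
    fun {s t} hs ht hst => by_contra fun hne =>
      hw.2 s t hs.2 ht.2 (hs.1.trans ht.1.symm) hne hst
  have hpigeon : w s₁ = w s₂ ∨ w s₁ = w s₃ ∨ w s₂ = w s₃ := by
    have := h₁.weight_eq_or_eq hab.subset
    have := h₂.weight_eq_or_eq hab.subset
    have := h₃.weight_eq_or_eq hab.subset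
    omega
  exact hpigeon.imp (weight_inj h₁ h₂) (Or.imp (weight_inj h₁ h₃) (weight_inj h₂ h₃))

theorem linProx_congr
    (h : ∀ v, v ≠ T.root → T.parent v ≠ T.root →
      (w v = w (T.parent v) ↔ w' v = w' (T.parent v))) (q : V) :
    T.linProx w q = T.linProx w' q := by
  ext r
  refine and_congr_right fun _ => forall₂_congr fun i hi => iff_congr ?_ Iff.rfl
  have hparent := iterate_parent_ne_root (i := i + 1) hi
  rw [Function.iterate_succ_apply'] at hparent ⊢
  exact h _ (iterate_parent_ne_root (Nat.lt_of_succ_lt hi)) hparent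

/-- The number of edges on the path from `v` to the root along which the weight changes, where the
root counts with the value of `w` there. -/
def numChanges (T : PTree V) (w : V → ℕ) (v : V) : ℕ :=
  Nat.count (fun i => w (T.parent^[i] v) ≠ w (T.parent^[i + 1] v)) (T.depth v)

theorem numChanges_of_ne_root {v : V} (hv : v ≠ T.root) :
    T.numChanges w v =
      T.numChanges w (T.parent v) + if w v ≠ w (T.parent v) then 1 else 0 := by
  rw [numChanges, T.depth_eq v hv, Nat.count_succ']
  rfl

/-- The candidate `2`-weighting: the parity of `numChanges`, with values shifted to `{1, 2}`. -/
def parityWeight (T : PTree V) (w : V → ℕ) (v : V) : ℕ := T.numChanges w v % 2 + 1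

theorem parityWeight_eq_parityWeight_parent_iff {v : V} (hv : v ≠ T.root) :
    T.parityWeight w v = T.parityWeight w (T.parent v) ↔ w v = w (T.parent v) := by
  rw [parityWeight, parityWeight, numChanges_of_ne_root hv]
  split_ifs <;> omega

theorem isWeighting_two_parityWeight
    (hinj : ∀ r s, r ≠ T.root → s ≠ T.root → T.parent r = T.parent s → w r = w s → r = s)
    (hchange : ∀ p r s, T.child r p → T.child s p → w r ≠ w p → w s ≠ w p → w r = w s) :
    T.IsWeighting 2 (T.parityWeight w) := by
  have range (v : V) : 1 ≤ T.parityWeight w v ∧ T.parityWeight w v ≤ 2 := by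
    unfold parityWeight
    omega
  refine ⟨fun v _ => range v, fun r s hr hs hrs hne heq => hne (hinj r s hr hs hrs ?_)⟩
  have hr_iff := parityWeight_eq_parityWeight_parent_iff (w := w) hr
  have hs_iff := parityWeight_eq_parityWeight_parent_iff (w := w) hs
  rw [← hrs] at hs_iff
  by_cases hrp : w r = w (T.parent r)
  · exact hrp.trans (hs_iff.1 (heq ▸ hr_iff.2 hrp)).symm
  · exact hchange _ r s ⟨rfl, hr⟩ ⟨hrs.symm, hs⟩ hrp
      fun hsp => hrp (hr_iff.1 (heq.trans (hs_iff.2 hsp)))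

theorem exists_eq_off_root_weight_eq_of_change (hw : T.IsWeighting d w)
    (h : ∀ q, ∃! S, S ∈ T.gammaFam w d q) :
    ∃ u : V → ℕ, (∀ v, v ≠ T.root → u v = w v) ∧
      ∀ p r s, T.child r p → T.child s p → u r ≠ u p → u s ≠ u p → u r = u s := by
  classical
  obtain ⟨a, b, hroot⟩ := exists_linProx_eq_gammaSet hw (h T.root)
  have hu : ∀ v, v ≠ T.root → Function.update w T.root a v = w v :=
    fun v hv => Function.update_of_ne hv a w
  refine ⟨Function.update w T.root a, hu, fun p r s hr hs hrp hsp => ?_⟩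
  rw [hu r hr.2] at hrp ⊢
  rw [hu s hs.2] at hsp ⊢
  by_cases hp : p = T.root
  · subst hp
    rw [Function.update_self] at hrp hsp
    rw [(hr.weight_eq_or_eq hroot.subset).resolve_left hrp,
      (hs.weight_eq_or_eq hroot.subset).resolve_left hsp]
  · rw [hu p hp] at hrp hsp
    obtain ⟨a, b, hparent⟩ := exists_linProx_eq_gammaSet hw (h (T.parent p))
    have := hr.weight_pair_eq hp hrp hparent.subset
    have := hs.weight_pair_eq hp hsp hparent.subset
    omega

theorem exists_isWeighting_two_linProx_eq (hw : T.IsWeighting d w)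
    (h : ∀ q, ∃! S, S ∈ T.gammaFam w d q) :
    ∃ w₂, T.IsWeighting 2 w₂ ∧ ∀ q, T.linProx w₂ q = T.linProx w q := by
  obtain ⟨u, hu, hchange⟩ := exists_eq_off_root_weight_eq_of_change hw h
  refine ⟨T.parityWeight u, isWeighting_two_parityWeight (fun r s hr hs hrs heq => ?_) hchange,
    linProx_congr fun v hv hparent => ?_⟩
  · rw [hu r hr, hu s hs] at heq
    exact by_contra fun hne => hw.2 r s hr hs hrs hne heq
  · rw [parityWeight_eq_parityWeight_parent_iff hv, hu v hv, hu _ hparent]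

end PTree

theorem LPEnriques_two_dimensional_iff_general {V : Type} (T : PTree V) (d : ℕ) (w : V → ℕ)
    (hw : T.IsWeighting d w) :
    ((∃ w2 : V → ℕ, T.IsWeighting 2 w2 ∧ ∀ q : V, T.gammaFam w2 2 q = T.gammaFam w d q) ↔
      ∀ q : V, ∃! S : Set V, S ∈ T.gammaFam w d q) ∧
    ((∀ q : V, ∃! S : Set V, S ∈ T.gammaFam w d q) →
      ∀ q s₁ s₂ s₃ : V, T.child s₁ q → T.child s₂ q → T.child s₃ q →
        s₁ = s₂ ∨ s₁ = s₃ ∨ s₂ = s₃) := by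
  refine ⟨⟨?_, fun h => ?_⟩, fun h q _ _ _ => PTree.eq_or_eq_or_eq_of_child hw (h q)⟩
  · rintro ⟨w₂, -, hfam⟩ q
    exact hfam q ▸ T.existsUnique_mem_gammaFam_two w₂ q
  · obtain ⟨w₂, hw₂, hlin⟩ := PTree.exists_isWeighting_two_linProx_eq hw h
    refine ⟨w₂, hw₂, fun q => ?_⟩
    rw [PTree.gammaFam_eq_singleton_linProx hw₂ (T.existsUnique_mem_gammaFam_two w₂ q),
      PTree.gammaFam_eq_singleton_linProx hw (h q), hlin q]

/-- Let `d ≥ 2` and let `α` be a `d`-weighting of a finite rooted tree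
`Γ`.  Then there exists a `2`-weighting `β` of `Γ` with `Γ_β(q) = Γ_α(q)` for every
vertex `q` if and only if `Γ_α(q)` has exactly one element for every vertex `q`; and in
that case every vertex of `Γ` has at most two children.  (Combinatorial content of: the
characteristic cone of a toric constellation is regular iff its LP-Enriques diagram is
induced by a two-dimensional constellation.) -/
theorem LPEnriques_two_dimensional_iff {V : Type} [Fintype V] (T : PTree V)
    (d : ℕ) (hd : 2 ≤ d) (w : V → ℕ) (hw : T.IsWeighting d w) :
    ((∃ w2 : V → ℕ, T.IsWeighting 2 w2 ∧ ∀ q : V, T.gammaFam w2 2 q = T.gammaFam w d q) ↔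
      ∀ q : V, ∃! S : Set V, S ∈ T.gammaFam w d q) ∧
    ((∀ q : V, ∃! S : Set V, S ∈ T.gammaFam w d q) →
      ∀ q s₁ s₂ s₃ : V, T.child s₁ q → T.child s₂ q → T.child s₃ q →
        s₁ = s₂ ∨ s₁ = s₃ ∨ s₂ = s₃) :=
  LPEnriques_two_dimensional_iff_general T d w hw
end
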